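/- arXiv:1606.05805 — 2 statements merged into one kernel-verified Lean document; each statement's English description precedes it below -/
import Mathlib

section
/- Let Ŝ be the Doob h-transform of two-dimensional simple random walk with respect to the potential kernel a (transition probability a(y)/(4a(x)) from x ≠ 0 to y ~ x). Then the process 1/a(Ŝ_n), stopped at the first time Ŝ hits the set consisting of the four neighbors of the origin, is a martingale. -/
open MeasureTheory Filter

/-!
While `Ŝ` is away from the four neighbors of the origin, the weights `a(y)/(4a(x))` cancel against
the values `1/a(y)`, so the conditional expectation of `1/a(Ŝ_{n+1})` is `4 · 1/(4a(Ŝ_n))`. The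
increments of the stopped process are therefore centered; what remains is integrability, that is, a
positive lower bound for `a` off the origin.

That bound is a form of recurrence of the walk. The function `log (|x|² - 1)` tends to infinity and
is strictly superharmonic for `|x|² > 4`, so adding `ε log (|x|² - 1)` to a superharmonic function
that is bounded below yields a function that attains its minimum in a finite set. Letting `ε → 0`,
a function on `ℤ²` that is bounded below and superharmonic off a finite set attains its minimum.
This applies to `a` once its value at the origin is made positive.
-/

open scoped Topology

section Martingale

variable {Ω E : Type*} {m0 : MeasurableSpace Ω}

lemma stoppedProcess_succ [AddCommGroup E] (X : ℕ → Ω → E) (τ : Ω → WithTop ℕ) (n : ℕ) :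
    stoppedProcess X τ (n + 1) =
      stoppedProcess X τ n + {ω | (n : WithTop ℕ) < τ ω}.indicator (X (n + 1) - X n) := by
  ext ω
  rw [Pi.add_apply]
  by_cases h : ω ∈ {ω | (n : WithTop ℕ) < τ ω}
  · rw [stoppedProcess_eq_of_le (i := n) h.le,
      stoppedProcess_eq_of_le (i := n + 1) (ENat.natCast_add_one_le_iff.2 h),
      Set.indicator_of_mem h, Pi.sub_apply, add_sub_cancel]
  · have hτ : τ ω ≤ (n : WithTop ℕ) := not_lt.1 h
    rw [stoppedProcess_eq_of_ge (i := n) hτ,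
      stoppedProcess_eq_of_ge (i := n + 1) (hτ.trans (WithTop.coe_le_coe.2 n.le_succ)),
      Set.indicator_of_notMem h, add_zero]

lemma stoppedProcess_eq_apply_toNat_min (X : ℕ → Ω → E) (τ : Ω → ℕ∞) :
    stoppedProcess X τ = fun (n : ℕ) ω => X (min (n : ℕ∞) (τ ω)).toNat ω := by
  ext n ω
  rcases le_total (n : ℕ∞) (τ ω) with h | h
  · rw [stoppedProcess_eq_of_le (i := n) h, min_eq_left h, ENat.toNat_natCast]
  · obtain ⟨k, hk⟩ := ENat.ne_top_iff_exists.1 (h.trans_lt (ENat.natCast_lt_top n)).ne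
    rw [stoppedProcess_eq_of_ge (i := n) h, min_eq_right h, ← hk]
    rfl

theorem martingale_stoppedProcess_of_condExp_eq [NormedAddCommGroup E] [NormedSpace ℝ E]
    [CompleteSpace E] {μ : Measure Ω} [IsFiniteMeasure μ] {ℱ : Filtration ℕ m0} {X : ℕ → Ω → E}
    {τ : Ω → WithTop ℕ} (hτ : IsStoppingTime ℱ τ) (hX : StronglyAdapted ℱ X)
    (hX_int : ∀ n, Integrable (X n) μ)
    (hcond : ∀ n : ℕ, ∀ᵐ ω ∂μ, n < τ ω → μ[X (n + 1) | ℱ n] ω = X n ω) :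
    Martingale (stoppedProcess X τ) ℱ μ := by
  have hadapted := hX.stoppedProcess_of_discrete hτ
  have hstopped := integrable_stoppedProcess hτ hX_int
  refine martingale_nat hadapted hstopped fun n => ?_
  have hD : Integrable (X (n + 1) - X n) μ := (hX_int _).sub (hX_int _)
  have hgt : MeasurableSet[ℱ n] {ω | (n : WithTop ℕ) < τ ω} := hτ.measurableSet_gt n
  have hcond_add := condExp_add (hstopped n) (hD.indicator (ℱ.le n _ hgt)) (ℱ n)
  have hcond_ind := condExp_indicator hD hgt
  have hcond_sub := condExp_sub (hX_int (n + 1)) (hX_int n) (ℱ n)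
  rw [condExp_of_stronglyMeasurable (ℱ.le n) (hadapted n) (hstopped n)] at hcond_add
  rw [condExp_of_stronglyMeasurable (ℱ.le n) (hX n) (hX_int n)] at hcond_sub
  rw [stoppedProcess_succ]
  filter_upwards [hcond_add, hcond_ind, hcond_sub, hcond n]
    with ω hcond_add hcond_ind hcond_sub hcond
  rw [hcond_add, Pi.add_apply, hcond_ind]
  by_cases h : ω ∈ {ω | (n : WithTop ℕ) < τ ω}
  · rw [Set.indicator_of_mem h, hcond_sub, Pi.sub_apply, hcond h, sub_self, add_zero]
  · rw [Set.indicator_of_notMem h, add_zero]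

lemma hittingAfter_zero_eq_sInf {β : Type*} (S : ℕ → Ω → β) (s : Set β) (ω : Ω) :
    hittingAfter S s 0 ω = sInf {k : ℕ∞ | ∃ m : ℕ, k = m ∧ S m ω ∈ s} := by
  refine le_antisymm (le_sInf ?_) ?_
  · rintro _ ⟨m, rfl, hm⟩
    exact hittingAfter_le_of_mem m.zero_le hm
  · by_cases h : hittingAfter S s 0 ω = ⊤
    · exact h ▸ le_top
    · exact sInf_le ⟨(hittingAfter S s 0 ω).untopA, (WithTop.untopA_eq_untop h ▸
        WithTop.coe_untop _ h).symm, hittingAfter_mem_set_of_ne_top h⟩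

end Martingale

section MinimumPrinciple

theorem le_of_le_on_of_lyapunov {V : Type*} (P : (V → ℝ) →ₗ[ℝ] (V → ℝ))
    (hP : ∀ f x, (∀ y, f x ≤ f y) → f x ≤ P f x) {K : Set V} {L u : V → ℝ} {m : ℝ}
    (hL_nonneg : ∀ x, 0 ≤ L x) (hL_top : Tendsto L cofinite atTop)
    (hL : ∀ x ∉ K, P L x < L x) (hu : ∀ x ∉ K, P u x ≤ u x)
    (hu_bdd : BddBelow (Set.range u)) (hm : ∀ x ∈ K, m ≤ u x) (x : V) : m ≤ u x := by
  obtain ⟨b, hb⟩ := hu_bdd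
  have hperturbed : ∀ ε > 0, m ≤ u x + ε * L x := by
    intro ε hε
    have htop : Tendsto (u + ε • L) cofinite atTop :=
      tendsto_atTop_add_left_of_le _ b (fun y => hb ⟨y, rfl⟩) (hL_top.const_mul_atTop hε)
    have : Nonempty V := ⟨x⟩
    obtain ⟨z, hz⟩ := htop.exists_forall_le
    have hzK : z ∈ K := by
      by_contra hzK
      have hmin := hP _ z hz
      simp only [map_add, map_smul, Pi.add_apply, Pi.smul_apply, smul_eq_mul] at hmin
      linarith [hu z hzK, mul_lt_mul_of_pos_left (hL z hzK) hε]
    calc m ≤ u z := hm z hzK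
      _ ≤ u z + ε * L z := le_add_of_nonneg_right (mul_nonneg hε.le (hL_nonneg z))
      _ ≤ u x + ε * L x := hz x
  have hlim : Tendsto (fun ε => u x + ε * L x) (𝓝[>] 0) (𝓝 (u x)) := by
    refine Tendsto.mono_left ?_ nhdsWithin_le_nhds
    exact Continuous.tendsto' (by fun_prop) _ _ (by ring)
  exact ge_of_tendsto hlim (eventually_mem_nhdsWithin.mono hperturbed)

/-- The transition operator of simple random walk on `ℤ²`. -/
noncomputable def neighborMean : (ℤ × ℤ → ℝ) →ₗ[ℝ] (ℤ × ℤ → ℝ) where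
  toFun f x := (f (x + (1, 0)) + f (x - (1, 0)) + f (x + (0, 1)) + f (x - (0, 1))) / 4
  map_add' f g := by
    ext x
    simp only [Pi.add_apply]
    ring
  map_smul' c f := by
    ext x
    simp only [Pi.smul_apply, smul_eq_mul, RingHom.id_apply]
    ring

lemma neighborMean_apply (f : ℤ × ℤ → ℝ) (x : ℤ × ℤ) :
    neighborMean f x =
      (f (x + (1, 0)) + f (x - (1, 0)) + f (x + (0, 1)) + f (x - (0, 1))) / 4 := rfl

lemma le_neighborMean_of_forall_le {f : ℤ × ℤ → ℝ} {c : ℝ} (h : ∀ y, c ≤ f y) (x : ℤ × ℤ) :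
    c ≤ neighborMean f x := by
  rw [neighborMean_apply]
  linarith [h (x + (1, 0)), h (x - (1, 0)), h (x + (0, 1)), h (x - (0, 1))]

/-- The squared Euclidean norm on `ℤ²`, kept integer-valued; the norm Mathlib puts on `ℤ × ℤ` is
the sup norm. -/
def latticeNormSq (x : ℤ × ℤ) : ℤ := x.1 ^ 2 + x.2 ^ 2

lemma norm_le_latticeNormSq (x : ℤ × ℤ) : ‖x‖ ≤ latticeNormSq x := by
  have habs (k : ℤ) : |k| ≤ k ^ 2 := sq_abs k ▸ Int.le_self_sq |k|
  refine max_le ?_ ?_ <;> rw [Int.norm_eq_abs, latticeNormSq] <;> norm_cast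
  · linarith [habs x.1, sq_nonneg x.2]
  · linarith [habs x.2, sq_nonneg x.1]

lemma tendsto_latticeNormSq_cofinite_atTop :
    Tendsto (fun x => (latticeNormSq x : ℝ)) cofinite atTop := by
  rw [← cocompact_eq_cofinite]
  exact tendsto_atTop_mono norm_le_latticeNormSq tendsto_norm_cocompact_atTop

lemma finite_setOf_latticeNormSq_le (N : ℤ) : {x | latticeNormSq x ≤ N}.Finite := by
  have h := tendsto_latticeNormSq_cofinite_atTop.eventually_gt_atTop (N : ℝ)
  simpa only [eventually_cofinite, Int.cast_lt, not_lt] using h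

lemma latticeNormSq_le_two_mul_add (x e : ℤ × ℤ) :
    latticeNormSq x ≤ 2 * (latticeNormSq (x + e) + latticeNormSq e) := by
  simp only [latticeNormSq, Prod.fst_add, Prod.snd_add]
  nlinarith [sq_nonneg (x.1 + 2 * e.1), sq_nonneg (x.2 + 2 * e.2)]

lemma one_lt_latticeNormSq_add {x e : ℤ × ℤ} (hx : 4 < latticeNormSq x)
    (he : latticeNormSq e = 1) : 1 < latticeNormSq (x + e) := by
  linarith [latticeNormSq_le_two_mul_add x e]

/-- A Lyapunov function for simple random walk on `ℤ²`. At the five points where `|x|² ≤ 1` the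
logarithm takes its junk value `0`. -/
noncomputable def logLyapunov (x : ℤ × ℤ) : ℝ := Real.log (latticeNormSq x - 1)

lemma logLyapunov_nonneg (x : ℤ × ℤ) : 0 ≤ logLyapunov x := by
  have h := Real.log_intCast_nonneg (latticeNormSq x - 1)
  rwa [Int.cast_sub, Int.cast_one] at h

lemma tendsto_logLyapunov : Tendsto logLyapunov cofinite atTop :=
  Real.tendsto_log_atTop.comp
    (tendsto_atTop_add_const_right _ (-1) tendsto_latticeNormSq_cofinite_atTop)

lemma prod_neighbors_latticeNormSq_sub_one_lt {x : ℤ × ℤ} (hx : 1 < latticeNormSq x) :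
    (latticeNormSq (x + (1, 0)) - 1) * (latticeNormSq (x - (1, 0)) - 1) *
        (latticeNormSq (x + (0, 1)) - 1) * (latticeNormSq (x - (0, 1)) - 1) <
      (latticeNormSq x - 1) ^ 4 := by
  obtain ⟨p, q⟩ := x
  simp only [latticeNormSq, Prod.mk_add_mk, Prod.mk_sub_mk, add_zero, sub_zero] at hx ⊢
  have hidentity : (p ^ 2 + q ^ 2 - 1) ^ 4 -
      ((p + 1) ^ 2 + q ^ 2 - 1) * ((p - 1) ^ 2 + q ^ 2 - 1) *
        (p ^ 2 + (q + 1) ^ 2 - 1) * (p ^ 2 + (q - 1) ^ 2 - 1) =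
      4 * (p ^ 2 - q ^ 2) ^ 2 + 2 * (p ^ 2 + q ^ 2) * (p ^ 2 + q ^ 2 - 2) + 1 := by
    ring
  rw [← sub_pos, hidentity]
  have hprod : 0 ≤ (p ^ 2 + q ^ 2) * (p ^ 2 + q ^ 2 - 2) :=
    mul_nonneg (by linarith) (by linarith)
  linarith [sq_nonneg (p ^ 2 - q ^ 2)]

lemma neighborMean_logLyapunov_lt {x : ℤ × ℤ} (hx : 4 < latticeNormSq x) :
    neighborMean logLyapunov x < logLyapunov x := by
  have hpos {e : ℤ × ℤ} (he : latticeNormSq e = 1) : (0 : ℝ) < latticeNormSq (x + e) - 1 :=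
    sub_pos.2 (mod_cast one_lt_latticeNormSq_add hx he)
  have hright := hpos (e := (1, 0)) (by decide)
  have hleft := hpos (e := -(1, 0)) (by decide)
  have hup := hpos (e := (0, 1)) (by decide)
  have hdown := hpos (e := -(0, 1)) (by decide)
  rw [← sub_eq_add_neg] at hleft hdown
  have hlog : 4 * neighborMean logLyapunov x < 4 * logLyapunov x := by
    calc 4 * neighborMean logLyapunov x
        = Real.log ((latticeNormSq (x + (1, 0)) - 1) * (latticeNormSq (x - (1, 0)) - 1) *
            (latticeNormSq (x + (0, 1)) - 1) * (latticeNormSq (x - (0, 1)) - 1)) := by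
          rw [Real.log_mul (by positivity) hdown.ne', Real.log_mul (by positivity) hup.ne',
            Real.log_mul hright.ne' hleft.ne', neighborMean_apply]
          simp only [logLyapunov]
          ring
      _ < Real.log ((latticeNormSq x - 1) ^ 4) :=
          Real.log_lt_log (by positivity)
            (mod_cast prod_neighbors_latticeNormSq_sub_one_lt (by linarith))
      _ = 4 * logLyapunov x := by rw [Real.log_pow, logLyapunov, Nat.cast_ofNat]
  linarith

theorem exists_forall_le_of_neighborMean_le {K : Set (ℤ × ℤ)} (hK : K.Finite) {u : ℤ × ℤ → ℝ}
    (hu_bdd : BddBelow (Set.range u)) (hu : ∀ x ∉ K, neighborMean u x ≤ u x) :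
    ∃ x₀, ∀ x, u x₀ ≤ u x := by
  obtain ⟨x₀, -, hx₀⟩ := Set.exists_min_image _ u (hK.union (finite_setOf_latticeNormSq_le 4))
    ⟨0, Or.inr (by decide)⟩
  refine ⟨x₀, le_of_le_on_of_lyapunov neighborMean (fun f x h => le_neighborMean_of_forall_le h x)
    logLyapunov_nonneg tendsto_logLyapunov (fun x hx => ?_) (fun x hx => ?_) hu_bdd hx₀⟩
  · exact neighborMean_logLyapunov_lt (not_le.1 fun h => hx (Or.inr h))
  · exact hu x fun h => hx (Or.inl h)

end MinimumPrinciple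

section PotentialKernel

/-- The four neighbors of the origin in `ℤ²`. -/
def originNeighbors : Set (ℤ × ℤ) := {(1, 0), (-1, 0), (0, 1), (0, -1)}

lemma neighborMean_congr_of_eqOn_ne_zero {f g : ℤ × ℤ → ℝ} (h : ∀ y ≠ 0, f y = g y)
    {x : ℤ × ℤ} (hx : x ∉ originNeighbors) : neighborMean f x = neighborMean g x := by
  simp only [originNeighbors, Set.mem_insert_iff, Set.mem_singleton_iff, not_or] at hx
  obtain ⟨hright, hleft, hup, hdown⟩ := hx
  rw [neighborMean_apply, neighborMean_apply,
    h _ (mt eq_neg_of_add_eq_zero_left hleft), h _ (sub_ne_zero.2 hright),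
    h _ (mt eq_neg_of_add_eq_zero_left hdown), h _ (sub_ne_zero.2 hup)]

variable {a : ℤ × ℤ → ℝ}

lemma neighborMean_mul_one_div_eq_one (ha : ∀ x ≠ 0, a x ≠ 0) {x : ℤ × ℤ}
    (hx : x ∉ originNeighbors) : neighborMean (fun y => a y * (1 / a y)) x = 1 := by
  rw [neighborMean_congr_of_eqOn_ne_zero (fun y hy => mul_one_div_cancel (ha y hy)) hx,
    neighborMean_apply]
  norm_num

lemma exists_pos_forall_ne_zero_le (hpos : ∀ x ≠ 0, 0 < a x)
    (hsuper : ∀ x ≠ 0, neighborMean a x ≤ a x) : ∃ c > 0, ∀ x ≠ 0, c ≤ a x := by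
  set u := Function.update a 0 1
  have hu {x : ℤ × ℤ} (hx : x ≠ 0) : u x = a x := Function.update_of_ne hx 1 a
  have hu_pos (x : ℤ × ℤ) : 0 < u x := by
    rcases eq_or_ne x 0 with rfl | hx
    · simp [u]
    · exact hu hx ▸ hpos x hx
  have hK : (insert 0 originNeighbors).Finite := by simp [originNeighbors]
  have hu_super : ∀ x ∉ insert 0 originNeighbors, neighborMean u x ≤ u x := by
    intro x hx
    obtain ⟨hx0, hxN⟩ := not_or.1 hx
    rw [neighborMean_congr_of_eqOn_ne_zero (fun y hy => hu hy) hxN, hu hx0]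
    exact hsuper x hx0
  have hu_bdd : BddBelow (Set.range u) := ⟨0, Set.forall_mem_range.2 fun x => (hu_pos x).le⟩
  obtain ⟨x₀, hx₀⟩ := exists_forall_le_of_neighborMean_le hK hu_bdd hu_super
  exact ⟨u x₀, hu_pos x₀, fun x hx => hu hx ▸ hx₀ x⟩

end PotentialKernel

/-- Let `Ŝ` be the Doob h-transform of two-dimensional simple random walk
with respect to the potential kernel `a` (transition probability `a(y)/(4a(x))` from
`x ≠ 0` to each neighbor `y`). Then `1/a(Ŝ_n)`, stopped at the first time `Ŝ` hits the
four neighbors of the origin, is a martingale. -/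
theorem hatS_reciprocal_stopped_martingale
    {Ω : Type*} [m0 : MeasurableSpace Ω] (μ : Measure Ω) [IsProbabilityMeasure μ]
    (ℱ : Filtration ℕ m0)
    (a : ℤ × ℤ → ℝ)
    (ha0 : a 0 = 0)
    (hapos : ∀ x : ℤ × ℤ, x ≠ 0 → 0 < a x)
    (haharm : ∀ x : ℤ × ℤ, x ≠ 0 →
      (a (x + (1, 0)) + a (x - (1, 0)) + a (x + (0, 1)) + a (x - (0, 1))) / 4 = a x)
    (S : ℕ → Ω → ℤ × ℤ) (hadapted : Adapted ℱ S)
    -- Ŝ lives on ℤ² \ {0}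
    (hS0 : ∀ n ω, S n ω ≠ 0)
    -- the Markov step property of the Doob h-transform: from `x ≠ 0` the chain moves to a
    -- neighbor `y` with probability `a(y)/(4a(x))`
    (hstep : ∀ (n : ℕ) (g : ℤ × ℤ → ℝ), (∃ Cg : ℝ, ∀ z, |g z| ≤ Cg) →
      μ[(fun ω => g (S (n + 1) ω)) | ℱ n] =ᵐ[μ]
        fun ω => (a (S n ω + (1, 0)) * g (S n ω + (1, 0))
          + a (S n ω - (1, 0)) * g (S n ω - (1, 0))
          + a (S n ω + (0, 1)) * g (S n ω + (0, 1))
          + a (S n ω - (0, 1)) * g (S n ω - (0, 1))) / (4 * a (S n ω)))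
    -- the first hitting time of the set of the four neighbors of the origin
    (τ : Ω → ℕ∞)
    (hτ : ∀ ω, τ ω = sInf {k : ℕ∞ | ∃ m : ℕ, k = m ∧
      S m ω ∈ ({(1, 0), (-1, 0), (0, 1), (0, -1)} : Set (ℤ × ℤ))}) :
    Martingale (fun (n : ℕ) (ω : Ω) => 1 / a (S ((min (n : ℕ∞) (τ ω)).toNat) ω)) ℱ μ := by
  obtain ⟨c, hc, hca⟩ := exists_pos_forall_ne_zero_le hapos fun x hx => (haharm x hx).le
  have hbound (z : ℤ × ℤ) : |1 / a z| ≤ 1 / c := by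
    rcases eq_or_ne z 0 with rfl | hz
    · simp [ha0, hc.le]
    · rw [abs_of_pos (one_div_pos.2 (hapos z hz))]
      exact one_div_le_one_div_of_le hc (hca z hz)
  have hτ_hit : τ = hittingAfter S originNeighbors 0 :=
    funext fun ω => (hτ ω).trans (hittingAfter_zero_eq_sInf S originNeighbors ω).symm
  have hstopping : IsStoppingTime ℱ τ :=
    hτ_hit ▸ hadapted.isStoppingTime_hittingAfter (Set.to_countable _).measurableSet
  have hX : StronglyAdapted ℱ fun n ω => 1 / a (S n ω) := fun n =>
    ((measurable_of_countable fun z => 1 / a z).comp (hadapted n)).stronglyMeasurable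
  have hX_int (n : ℕ) : Integrable (fun ω => 1 / a (S n ω)) μ :=
    .of_bound ((hX n).mono (ℱ.le n)).aestronglyMeasurable (1 / c) (ae_of_all _ fun ω => hbound _)
  have hmart := martingale_stoppedProcess_of_condExp_eq hstopping hX hX_int fun n => by
    filter_upwards [hstep n (fun z => 1 / a z) ⟨1 / c, hbound⟩] with ω hω hn
    have hN : S n ω ∉ originNeighbors := notMem_of_lt_hittingAfter (hτ_hit ▸ hn) n.zero_le
    rw [hω, ← div_div]
    exact congrArg (· / _) (neighborMean_mul_one_div_eq_one (fun x hx => (hapos x hx).ne') hN)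
  rwa [stoppedProcess_eq_apply_toNat_min] at hmart
end

section
/- Let d ≥ 3, let x ∈ ∂B(n), and let k > 1. Then as n → ∞, P_x[τ₁(∂B(n+k)) < τ₁(B(n))] = cap(B(n)) hm_{B(n)}(x) / (1 − (1 + k/n)^{−(d−2)} + O(n^{−1})), where the O(n^{−1}) term depends on n only (uniformly in k). -/
open MeasureTheory Real
open scoped Classical ENNReal

/-- Points of `ℤ^d`. -/
abbrev ZV (d : ℕ) := Fin d → ℤ

/-- Euclidean norm on `ℤ^d`. -/
noncomputable def znorm {d : ℕ} (x : ZV d) : ℝ := Real.sqrt (∑ j, ((x j : ℝ)) ^ 2)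

/-- Nearest-neighbor adjacency on `ℤ^d`. -/
def zadj {d : ℕ} (x y : ZV d) : Prop := (∑ j, |x j - y j|) = 1

/-- The closed Euclidean ball `B(r)` in `ℤ^d`, centered at the origin. -/
def zball (d : ℕ) (r : ℝ) : Set (ZV d) := {y | znorm y ≤ r}

/-- The internal boundary `∂A` of a set `A ⊆ ℤ^d`. -/
def ibdry {d : ℕ} (A : Set (ZV d)) : Set (ZV d) := {x | x ∈ A ∧ ∃ y, y ∉ A ∧ zadj x y}

/-- `P x` is the law (on path space) of simple random walk on `ℤ^d` started at `x`,
characterized by its prefix probabilities. -/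
def IsSRW (d : ℕ) (P : ZV d → Measure (ℕ → ZV d)) : Prop :=
  ∀ (x : ZV d) (n : ℕ) (f : ℕ → ZV d),
    P x {ω | ∀ i ≤ n, ω i = f i} =
      if f 0 = x ∧ ∀ i < n, zadj (f i) (f (i + 1)) then (1 / (2 * d) : ℝ≥0∞) ^ n else 0

/-- The hitting time `τ₁(A) = inf{k ≥ 1 : ω_k ∈ A}` (with value `⊤` if the set
is never hit), valued in `ℕ∞`. -/
noncomputable def hitT {d : ℕ} (A : Set (ZV d)) (ω : ℕ → ZV d) : ℕ∞ :=
  sInf {k : ℕ∞ | ∃ n : ℕ, k = n ∧ 1 ≤ n ∧ ω n ∈ A}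

/-- Escape probability `Es_A(x) = P_x[τ₁(A) = ∞]` for simple random walk (`d ≥ 3`). -/
noncomputable def escProb {d : ℕ} (P : ZV d → Measure (ℕ → ZV d))
    (A : Set (ZV d)) (x : ZV d) : ℝ :=
  (P x {ω | ∀ j : ℕ, 1 ≤ j → ω j ∉ A}).toReal

/-- Capacity `cap(A) = Σ_{x ∈ A} Es_A(x)` for simple random walk (`d ≥ 3`). -/
noncomputable def capac {d : ℕ} (P : ZV d → Measure (ℕ → ZV d)) (A : Set (ZV d)) : ℝ :=
  ∑' y : A, escProb P A y

/-- Harmonic measure `hm_A(x) = Es_A(x)/cap(A)`. -/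
noncomputable def harmMeas {d : ℕ} (P : ZV d → Measure (ℕ → ZV d))
    (A : Set (ZV d)) (x : ZV d) : ℝ :=
  escProb P A x / capac P A

/-!
The probability `h` of ever hitting `B(r)` is harmonic off `B(r)`. Far from the origin the radial
function `|x|²⁻ᵈ` is harmonic up to an error `O(|x|⁻¹⁻ᵈ)`, which the Laplacian of `c |x|¹⁻ᵈ` absorbs
for large `c`. Comparing `h` with the resulting sub- and superharmonic functions
`|x|²⁻ᵈ ± c |x|¹⁻ᵈ` yields `h(y) = (|y|/r)²⁻ᵈ + O(1/r)`, so on `∂B(r + k)` the probability `1 - h`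
of never hitting `B(r)` is `1 - (1 + k/r)²⁻ᵈ + O(1/r)`. A walk from `x ∈ B(r)` that never returns
to `B(r)` must first reach `∂B(r + k)`, so `Es(x) = cap · hm(x)` is the probability of doing so
before returning times this almost constant value of `1 - h`.
-/

open Filter Asymptotics
open scoped BigOperators Topology

variable {d : ℕ}

/-! ### The lattice -/

/-- The `2d` unit steps `±e_j` of `ℤ^d`, indexed by the coordinate `j` and the sign
(`true` for `+`). -/
def unitStep (i : Fin d × Bool) : ZV d := Pi.single i.1 (if i.2 then 1 else -1)

lemma unitStep_injective : Function.Injective (unitStep (d := d)) := by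
  rintro ⟨i, a⟩ ⟨j, b⟩ h
  obtain rfl : i = j := by
    by_contra hij
    have := congrFun h i
    cases a <;> simp [unitStep, hij] at this
  have := congrFun h i
  cases a <;> cases b <;> simp_all [unitStep]

lemma zadj_add_unitStep (x : ZV d) (i : Fin d × Bool) : zadj x (x + unitStep i) := by
  obtain ⟨j, s⟩ := i
  unfold zadj
  rw [Finset.sum_eq_single_of_mem j (Finset.mem_univ j) fun l _ hl => by simp [unitStep, hl]]
  cases s <;> simp [unitStep]

lemma zadj_symm {x y : ZV d} (h : zadj x y) : zadj y x := by
  simpa only [zadj, abs_sub_comm] using h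

lemma exists_unitStep_of_zadj {x y : ZV d} (h : zadj x y) : ∃ i, x + unitStep i = y := by
  obtain ⟨j, hj⟩ : ∃ j, x j - y j ≠ 0 := by
    by_contra! h0
    simp [zadj, h0] at h
  rw [zadj, ← Finset.add_sum_erase _ _ (Finset.mem_univ j)] at h
  have hnonneg : ∀ l ∈ Finset.univ.erase j, 0 ≤ |x l - y l| := fun l _ => abs_nonneg _
  have hj_ge : 1 ≤ |x j - y j| := Int.one_le_abs hj
  have hrest_nonneg := Finset.sum_nonneg hnonneg
  have hrest := (Finset.sum_eq_zero_iff_of_nonneg hnonneg).1 (by omega)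
  refine ⟨(j, decide (x j < y j)), funext fun l => ?_⟩
  rcases eq_or_ne l j with rfl | hl
  · rcases lt_or_gt_of_ne (sub_ne_zero.1 hj) with hlt | hgt
    · simp only [unitStep, hlt, decide_true, if_true, Pi.add_apply, Pi.single_eq_same]
      grind
    · simp only [unitStep, hgt.not_gt, decide_false, Bool.false_eq_true, if_false, Pi.add_apply,
        Pi.single_eq_same]
      grind
  · have := abs_eq_zero.1 (hrest l (by simp [hl]))
    simp only [unitStep, Pi.add_apply, Pi.single_eq_of_ne hl]
    omega

lemma zadj_iff {x y : ZV d} : zadj x y ↔ ∃ i, x + unitStep i = y :=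
  ⟨exists_unitStep_of_zadj, fun ⟨i, hi⟩ => hi ▸ zadj_add_unitStep x i⟩

lemma sum_ite_eq_add_unitStep {M : Type*} [AddCommMonoid M] (x y : ZV d) (c : M) :
    ∑ i, (if y = x + unitStep i then c else 0) = if zadj x y then c else 0 := by
  split_ifs with h
  · obtain ⟨i, rfl⟩ := zadj_iff.1 h
    simp [unitStep_injective.eq_iff]
  · exact Finset.sum_eq_zero fun i _ => if_neg fun hi => h (zadj_iff.2 ⟨i, hi.symm⟩)

lemma mem_ibdry_compl_of_add_unitStep {W : Set (ZV d)} {x : ZV d} {i : Fin d × Bool}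
    (hx : x ∈ W) (hi : x + unitStep i ∉ W) : x + unitStep i ∈ ibdry Wᶜ :=
  ⟨hi, x, not_not.2 hx, zadj_symm (zadj_add_unitStep x i)⟩

lemma add_unitStep_mem_of_notMem_ibdry {B : Set (ZV d)} {x : ZV d} (hx : x ∈ B)
    (hxB : x ∉ ibdry B) (i : Fin d × Bool) : x + unitStep i ∈ B :=
  by_contra fun h => hxB ⟨hx, _, h, zadj_add_unitStep x i⟩

/-! ### Averages over neighbours -/

/-- The transition operator of simple random walk: the mean of `f` over the `2d` neighbours. -/
noncomputable def stepAvg (f : ZV d → ℝ) (x : ZV d) : ℝ := 𝔼 i, f (x + unitStep i)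

lemma stepAvg_mono {f g : ZV d → ℝ} {x : ZV d}
    (h : ∀ i, f (x + unitStep i) ≤ g (x + unitStep i)) : stepAvg f x ≤ stepAvg g x :=
  Finset.expect_le_expect fun i _ => h i

lemma stepAvg_const [NeZero d] (c : ℝ) (x : ZV d) : stepAvg (fun _ => c) x = c :=
  Fintype.expect_const c

lemma stepAvg_add (f g : ZV d → ℝ) (x : ZV d) :
    stepAvg (fun y => f y + g y) x = stepAvg f x + stepAvg g x :=
  Finset.expect_add_distrib ..

lemma stepAvg_sub (f g : ZV d → ℝ) (x : ZV d) :
    stepAvg (fun y => f y - g y) x = stepAvg f x - stepAvg g x :=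
  Finset.expect_sub_distrib ..

lemma stepAvg_const_mul (c : ℝ) (f : ZV d → ℝ) (x : ZV d) :
    stepAvg (fun y => c * f y) x = c * stepAvg f x :=
  (Finset.mul_expect ..).symm

lemma le_of_subharmonic [NeZero d] {W : Set (ZV d)} (hW : W.Finite) {g : ZV d → ℝ} {δ : ℝ}
    (hsub : ∀ x ∈ W, g x ≤ stepAvg g x) (hbdry : ∀ x ∈ ibdry Wᶜ, g x ≤ δ) :
    ∀ x ∈ W, g x ≤ δ := by
  by_contra! ⟨x, hx, hδx⟩
  -- Among the maximizers of `g` on `W`, the one with the largest zeroth coordinate has a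
  -- neighbour at which `g` is strictly smaller.
  obtain ⟨z, hz, hmax⟩ := W.exists_max_image (fun y => toLex (g y, y 0)) hW ⟨x, hx⟩
  simp only [Prod.Lex.toLex_le_toLex] at hmax
  have hδz : δ < g z := by grind
  have hle : ∀ i, g (z + unitStep i) ≤ g z := fun i => by
    by_cases hi : z + unitStep i ∈ W
    · grind
    · exact (hbdry _ (mem_ibdry_compl_of_add_unitStep hz hi)).trans hδz.le
  have hlt : g (z + unitStep (0, true)) < g z := by
    by_cases hi : z + unitStep (0, true) ∈ W
    · rcases hmax _ hi with h | ⟨-, h⟩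
      · exact h
      · simp [unitStep] at h
    · exact (hbdry _ (mem_ibdry_compl_of_add_unitStep hz hi)).trans_lt hδz
  exact (hsub z hz).not_gt <|
    Finset.expect_lt (fun i _ => hle i) ⟨_, Finset.mem_univ _, hlt⟩

/-! ### Path space -/

section PathSpace

variable {S : Type*}

/-- The time shift on paths: `ω ↦ (ω₁, ω₂, …)`. -/
def pathShift (ω : ℕ → S) : ℕ → S := fun n => ω (n + 1)

/-- The event that the path ever visits `A` (time `0` included). -/
def hitEvent (A : Set S) : Set (ℕ → S) := {ω | ∃ m, ω m ∈ A}

/-- The event that the path visits `A` by time `T` (time `0` included). -/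
def hitByEvent (A : Set S) (T : ℕ) : Set (ℕ → S) := {ω | ∃ m ≤ T, ω m ∈ A}

/-- The event that the path visits `D`, at a time up to which it has avoided `A`
(time `0` included). -/
def hitBeforeEvent (D A : Set S) : Set (ℕ → S) := {ω | ∃ m, ω m ∈ D ∧ ∀ j ≤ m, ω j ∉ A}

lemma hitEvent_eq_iUnion (A : Set S) : hitEvent A = ⋃ T, hitByEvent A T := by
  ext ω
  simp only [hitEvent, hitByEvent, Set.mem_iUnion, Set.mem_ofPred_eq]
  exact ⟨fun ⟨m, hm⟩ => ⟨m, m, le_rfl, hm⟩, fun ⟨_, m, _, hm⟩ => ⟨m, hm⟩⟩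

lemma monotone_hitByEvent (A : Set S) : Monotone (hitByEvent A) :=
  fun _ _ h _ ⟨m, hm, hA⟩ => ⟨m, hm.trans h, hA⟩

lemma mem_hitEvent_iff {A : Set S} {ω : ℕ → S} :
    ω ∈ hitEvent A ↔ ω 0 ∈ A ∨ pathShift ω ∈ hitEvent A :=
  Nat.or_exists_add_one.symm

lemma mem_hitByEvent_succ_iff {A : Set S} {T : ℕ} {ω : ℕ → S} :
    ω ∈ hitByEvent A (T + 1) ↔ ω 0 ∈ A ∨ pathShift ω ∈ hitByEvent A T := by
  refine Nat.or_exists_add_one.symm.trans ?_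
  simp [hitByEvent, pathShift]

lemma mem_hitBeforeEvent_iff {D A : Set S} {ω : ℕ → S} :
    ω ∈ hitBeforeEvent D A ↔ ω 0 ∉ A ∧ (ω 0 ∈ D ∨ pathShift ω ∈ hitBeforeEvent D A) := by
  refine Nat.or_exists_add_one.symm.trans ?_
  simp only [hitBeforeEvent, pathShift, ← Nat.lt_succ_iff, Nat.forall_lt_succ_left,
    Set.mem_ofPred_eq]
  grind

variable [MeasurableSpace S]

lemma measurable_pathShift : Measurable (pathShift (S := S)) :=
  measurable_pi_lambda _ fun n => measurable_pi_apply (n + 1)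

lemma measurableSet_hitEvent {A : Set S} (hA : MeasurableSet A) :
    MeasurableSet (hitEvent A) := by
  unfold hitEvent
  measurability

lemma measurableSet_hitByEvent {A : Set S} (hA : MeasurableSet A) (T : ℕ) :
    MeasurableSet (hitByEvent A T) := by
  unfold hitByEvent
  measurability

lemma measurableSet_hitBeforeEvent {D A : Set S} (hD : MeasurableSet D) (hA : MeasurableSet A) :
    MeasurableSet (hitBeforeEvent D A) := by
  unfold hitBeforeEvent
  measurability

lemma measure_ext_of_prefix [Countable S] [MeasurableSingletonClass S] {μ ν : Measure (ℕ → S)}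
    [IsFiniteMeasure ν]
    (h : ∀ (n : ℕ) (f : ℕ → S), μ {ω | ∀ i ≤ n, ω i = f i} = ν {ω | ∀ i ≤ n, ω i = f i}) :
    μ = ν := by
  have hmap (n : ℕ) : μ.map (Preorder.frestrictLe n) = ν.map (Preorder.frestrictLe n) := by
    refine Measure.ext_of_singleton fun a => ?_
    have hpre : (Preorder.frestrictLe n ⁻¹' {a} : Set (ℕ → S)) =
        {ω : ℕ → S | ∀ i ≤ n, ω i = a ⟨min i n, by simp⟩} := by
      ext ω
      simp +contextual [funext_iff]
    have hmeas := Preorder.measurable_frestrictLe (X := fun _ : ℕ => S) n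
    rw [Measure.map_apply hmeas (measurableSet_singleton a),
      Measure.map_apply hmeas (measurableSet_singleton a), hpre]
    exact h n fun i => a ⟨min i n, by simp⟩
  have hν := ProbabilityTheory.isProjectiveMeasureFamily_map_restrict (P := ν)
    fun n => (measurable_pi_apply n).aemeasurable
  exact ((isProjectiveLimit_nat_iff hν μ).2 hmap).unique fun _ => rfl

end PathSpace

lemma hitT_lt_iff {D : Set (ZV d)} {ω : ℕ → ZV d} {τ : ℕ∞} :
    hitT D ω < τ ↔ ∃ m : ℕ, ω (m + 1) ∈ D ∧ ((m + 1 : ℕ) : ℕ∞) < τ := by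
  simp only [hitT, sInf_lt_iff, Set.mem_ofPred_eq]
  constructor
  · rintro ⟨_, ⟨m, rfl, hm, hD⟩, hτ⟩
    obtain ⟨m, rfl⟩ := Nat.exists_eq_add_of_le' hm
    exact ⟨m, hD, hτ⟩
  · rintro ⟨m, hD, hτ⟩
    exact ⟨_, ⟨m + 1, rfl, by simp, hD⟩, hτ⟩

lemma natCast_lt_hitT_iff {A : Set (ZV d)} {ω : ℕ → ZV d} {m : ℕ} :
    ((m + 1 : ℕ) : ℕ∞) < hitT A ω ↔ ∀ j ≤ m, ω (j + 1) ∉ A := by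
  rw [← not_le, ← ENat.lt_add_one_iff (ENat.natCast_ne_top _), hitT_lt_iff]
  norm_cast
  grind

lemma setOf_hitT_lt_hitT (D A : Set (ZV d)) :
    {ω | hitT D ω < hitT A ω} = pathShift ⁻¹' hitBeforeEvent D A := by
  ext ω
  simp only [Set.mem_ofPred_eq, hitT_lt_iff, natCast_lt_hitT_iff, Set.mem_preimage, hitBeforeEvent,
    pathShift]

lemma setOf_forall_notMem_eq (A : Set (ZV d)) :
    {ω : ℕ → ZV d | ∀ j, 1 ≤ j → ω j ∉ A} = pathShift ⁻¹' (hitEvent A)ᶜ := by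
  ext ω
  simp only [Set.mem_ofPred_eq, Set.mem_preimage, Set.mem_compl_iff, hitEvent, pathShift,
    not_exists]
  exact ⟨fun h m => h _ (by simp), fun h j hj => Nat.sub_add_cancel hj ▸ h (j - 1)⟩

/-! ### The Markov property -/

namespace IsSRW

variable {P : ZV d → Measure (ℕ → ZV d)}

lemma ae_start (hP : IsSRW d P) (x : ZV d) : ∀ᵐ ω ∂P x, ω 0 = x := by
  have hne : ∀ y ≠ x, ∀ᵐ ω ∂P x, ω 0 ≠ y := fun y hy => by
    simpa [ae_iff, hy] using hP x 0 fun _ => y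
  filter_upwards [ae_all_iff.2 fun y => ae_all_iff.2 (hne y)] with ω hω
  exact by_contra fun h => hω _ h rfl

lemma isProbabilityMeasure (hP : IsSRW d P) (x : ZV d) : IsProbabilityMeasure (P x) := by
  constructor
  have hstart : P x {ω | ω 0 = x} = 1 := by simpa using hP x 0 fun _ => x
  rw [← hstart]
  exact measure_congr ((eventuallyEq_univ.2 (hP.ae_start x)).symm)

lemma measure_prefix_cons (hP : IsSRW d P) (x : ZV d) (n : ℕ) (f : ℕ → ZV d) :
    P x {ω | ∀ i ≤ n, pathShift ω i = f i} =
      if zadj x (f 0) ∧ ∀ i < n, zadj (f i) (f (i + 1)) then (1 / (2 * d) : ℝ≥0∞) ^ (n + 1)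
      else 0 := by
  refine (measure_congr (eventuallyEq_set.2 ?_)).trans
    ((hP x (n + 1) fun j => Nat.casesOn j x f).trans ?_)
  · filter_upwards [hP.ae_start x] with ω hω
    simp only [pathShift, ← Nat.lt_succ_iff, Nat.forall_lt_succ_left, hω]
    exact ⟨fun h => ⟨rfl, h⟩, And.right⟩
  · simp only [Nat.forall_lt_succ_left]
    simp

lemma map_pathShift (hP : IsSRW d P) (x : ZV d) :
    (P x).map pathShift = (1 / (2 * d) : ℝ≥0∞) • ∑ i, P (x + unitStep i) := by
  have := hP.isProbabilityMeasure x
  refine (measure_ext_of_prefix fun n f => ?_).symm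
  have hprefix : MeasurableSet {ω : ℕ → ZV d | ∀ i ≤ n, ω i = f i} := by measurability
  rw [Measure.map_apply measurable_pathShift hprefix]
  have hsum : ∑ i, P (x + unitStep i) {ω | ∀ i ≤ n, ω i = f i} =
      if zadj x (f 0) ∧ ∀ i < n, zadj (f i) (f (i + 1)) then (1 / (2 * d) : ℝ≥0∞) ^ n else 0 := by
    simp only [hP _ n f, ite_and, sum_ite_eq_add_unitStep]
  rw [Measure.smul_apply, Measure.coe_finsetSum, Finset.sum_apply, hsum, smul_eq_mul, mul_ite,
    mul_zero, ← pow_succ']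
  exact (hP.measure_prefix_cons x n f).symm

lemma measureReal_preimage_pathShift (hP : IsSRW d P) (x : ZV d) {E : Set (ℕ → ZV d)}
    (hE : MeasurableSet E) :
    (P x).real (pathShift ⁻¹' E) = stepAvg (fun y => (P y).real E) x := by
  have := hP.isProbabilityMeasure
  rw [← map_measureReal_apply measurable_pathShift hE, hP.map_pathShift, stepAvg,
    Fintype.expect_eq_sum_div_card, measureReal_ennreal_smul_apply, measureReal_def,
    Measure.coe_finsetSum, Finset.sum_apply, ENNReal.toReal_sum (by simp)]
  simp [measureReal_def, div_eq_inv_mul, mul_comm]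

lemma measureReal_eq_stepAvg (hP : IsSRW d P) {x : ZV d} {E F : Set (ℕ → ZV d)}
    (hF : MeasurableSet F) (h : ∀ ω, ω 0 = x → (ω ∈ E ↔ pathShift ω ∈ F)) :
    (P x).real E = stepAvg (fun y => (P y).real F) x := by
  rw [← hP.measureReal_preimage_pathShift x hF]
  exact measureReal_congr ((hP.ae_start x).mono fun ω hω => propext (h ω hω))

lemma measureReal_eq_one (hP : IsSRW d P) {x : ZV d} {E : Set (ℕ → ZV d)}
    (h : ∀ ω, ω 0 = x → ω ∈ E) : (P x).real E = 1 := by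
  have := hP.isProbabilityMeasure x
  exact (measureReal_congr (eventuallyEq_univ.2 ((hP.ae_start x).mono h))).trans
    probReal_univ

lemma measureReal_eq_zero (hP : IsSRW d P) {x : ZV d} {E : Set (ℕ → ZV d)}
    (h : ∀ ω, ω 0 = x → ω ∉ E) : (P x).real E = 0 :=
  (measureReal_congr (eventuallyEq_empty.2 ((hP.ae_start x).mono h))).trans
    measureReal_empty

end IsSRW

/-! ### Hitting probabilities -/

/-- The probability, as a function of the starting point, that the walk ever visits `A`
(time `0` included). -/
noncomputable def hitProb (P : ZV d → Measure (ℕ → ZV d)) (A : Set (ZV d)) (x : ZV d) : ℝ :=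
  (P x).real (hitEvent A)

/-- The probability, as a function of the starting point, that the walk visits `D` while
avoiding `A` (time `0` included). -/
noncomputable def reachProb (P : ZV d → Measure (ℕ → ZV d)) (D A : Set (ZV d)) (x : ZV d) : ℝ :=
  (P x).real (hitBeforeEvent D A)

lemma hitProb_nonneg {P : ZV d → Measure (ℕ → ZV d)} {A : Set (ZV d)} {x : ZV d} :
    0 ≤ hitProb P A x :=
  measureReal_nonneg

namespace IsSRW

variable {P : ZV d → Measure (ℕ → ZV d)} {A D : Set (ZV d)} {x : ZV d}

lemma hitProb_of_mem (hP : IsSRW d P) (hx : x ∈ A) : hitProb P A x = 1 :=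
  hP.measureReal_eq_one fun _ hω => ⟨0, hω ▸ hx⟩

lemma hitProb_eq_stepAvg (hP : IsSRW d P) (hx : x ∉ A) :
    hitProb P A x = stepAvg (hitProb P A) x :=
  hP.measureReal_eq_stepAvg (measurableSet_hitEvent A.to_countable.measurableSet) fun ω hω => by
    simp [mem_hitEvent_iff (ω := ω), hω, hx]

lemma reachProb_of_mem_right (hP : IsSRW d P) (hx : x ∈ A) : reachProb P D A x = 0 :=
  hP.measureReal_eq_zero fun _ hω h => (mem_hitBeforeEvent_iff.1 h).1 (hω ▸ hx)

lemma reachProb_of_mem_left (hP : IsSRW d P) (hD : x ∈ D) (hA : x ∉ A) :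
    reachProb P D A x = 1 :=
  hP.measureReal_eq_one fun _ hω => mem_hitBeforeEvent_iff.2 ⟨hω ▸ hA, .inl (hω ▸ hD)⟩

lemma reachProb_eq_stepAvg (hP : IsSRW d P) (hD : x ∉ D) (hA : x ∉ A) :
    reachProb P D A x = stepAvg (reachProb P D A) x :=
  hP.measureReal_eq_stepAvg (measurableSet_hitBeforeEvent D.to_countable.measurableSet
    A.to_countable.measurableSet) fun ω hω => by
      simp [mem_hitBeforeEvent_iff (ω := ω), hω, hD, hA]

lemma escProb_eq_one_sub_stepAvg (hP : IsSRW d P) :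
    escProb P A x = 1 - stepAvg (hitProb P A) x := by
  have := hP.isProbabilityMeasure x
  have hA := measurableSet_hitEvent A.to_countable.measurableSet
  rw [escProb, setOf_forall_notMem_eq, ← measureReal_def, Set.preimage_compl,
    probReal_compl_eq_one_sub (measurable_pathShift hA), hP.measureReal_preimage_pathShift x hA]
  rfl

lemma measureReal_hitT_lt_hitT (hP : IsSRW d P) :
    (P x).real {ω | hitT D ω < hitT A ω} = stepAvg (reachProb P D A) x := by
  rw [setOf_hitT_lt_hitT]
  exact hP.measureReal_preimage_pathShift x (measurableSet_hitBeforeEvent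
    D.to_countable.measurableSet A.to_countable.measurableSet)

lemma tendsto_measureReal_hitByEvent (hP : IsSRW d P) :
    Tendsto (fun T => (P x).real (hitByEvent A T)) atTop (𝓝 (hitProb P A x)) := by
  have := hP.isProbabilityMeasure x
  rw [hitProb, hitEvent_eq_iUnion]
  exact (ENNReal.tendsto_toReal (measure_ne_top _ _)).comp
    (tendsto_measure_iUnion_atTop (monotone_hitByEvent A))

lemma hitProb_le_of_superharmonic (hP : IsSRW d P) {F : ZV d → ℝ}
    (hnonneg : ∀ y ∉ A, 0 ≤ F y) (hsuper : ∀ y ∉ A, stepAvg F y ≤ F y)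
    (hbdry : ∀ y ∈ ibdry A, 1 ≤ F y) (hx : x ∉ A) : hitProb P A x ≤ F x := by
  have hby (T : ℕ) : ∀ y ∉ A, (P y).real (hitByEvent A T) ≤ F y := by
    induction T with
    | zero =>
      refine fun y hy => (hP.measureReal_eq_zero fun ω hω => ?_).trans_le (hnonneg y hy)
      simp [hitByEvent, hω, hy]
    | succ T ih =>
      intro y hy
      have := hP.isProbabilityMeasure
      rw [hP.measureReal_eq_stepAvg
        (measurableSet_hitByEvent A.to_countable.measurableSet T)
        fun ω hω => by rw [mem_hitByEvent_succ_iff, hω, or_iff_right hy]]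
      refine (stepAvg_mono fun i => ?_).trans (hsuper y hy)
      by_cases hi : y + unitStep i ∈ A
      · exact measureReal_le_one.trans
          (hbdry _ ⟨hi, y, hy, zadj_symm (zadj_add_unitStep y i)⟩)
      · exact ih _ hi
  exact le_of_tendsto' hP.tendsto_measureReal_hitByEvent fun T => hby T x hx

lemma le_hitProb_of_subharmonic [NeZero d] (hP : IsSRW d P) {F : ZV d → ℝ}
    (hsub : ∀ y ∉ A, F y ≤ stepAvg F y) (hbdry : ∀ y ∈ ibdry A, F y ≤ 1)
    (hlim : Tendsto F cofinite (𝓝 0)) (hx : x ∉ A) : F x ≤ hitProb P A x := by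
  refine le_of_forall_pos_le_add fun δ hδ => ?_
  by_contra! hlt
  have hfin : ({y | δ ≤ F y} \ A).Finite := by
    refine Set.Finite.subset ?_ Set.sdiff_subset
    simpa using (hlim.eventually_lt_const hδ)
  have hle : ∀ y ∈ {y | δ ≤ F y} \ A, F y - hitProb P A y ≤ δ := by
    refine le_of_subharmonic hfin (fun y hy => ?_) fun y hy => ?_
    · rw [stepAvg_sub, ← hP.hitProb_eq_stepAvg hy.2]
      gcongr
      exact hsub y hy.2
    · obtain ⟨hyW, z, hz, hyz⟩ := hy
      by_cases hyA : y ∈ A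
      · rw [hP.hitProb_of_mem hyA]
        linarith [hbdry y ⟨hyA, z, (not_not.1 hz).2, hyz⟩]
      · have hFy : F y < δ := not_le.1 fun h => hyW ⟨h, hyA⟩
        linarith [hitProb_nonneg (P := P) (A := A) (x := y)]
  have hδx : δ ≤ F x := by linarith [hitProb_nonneg (P := P) (A := A) (x := x)]
  linarith [hle x ⟨hδx, hx⟩]

lemma mul_one_sub_hitProb_le_mul_reachProb [NeZero d] (hP : IsSRW d P) {B : Set (ZV d)}
    (hB : B.Finite) {a c : ℝ} (h : ∀ y ∈ ibdry B, a * (1 - hitProb P A y) ≤ c) :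
    ∀ x ∈ B, a * (1 - hitProb P A x) ≤ c * reachProb P (ibdry B) A x := by
  set g : ZV d → ℝ := fun x => a * (1 - hitProb P A x) - c * reachProb P (ibdry B) A x
  have hA : ∀ y ∈ A, g y = 0 := fun y hy => by
    simp [g, hP.hitProb_of_mem hy, hP.reachProb_of_mem_right hy]
  have hbdry : ∀ y ∈ A ∪ ibdry B, g y ≤ 0 := fun y hy => by
    by_cases hyA : y ∈ A
    · exact (hA y hyA).le
    · have hyB := hy.resolve_left hyA
      simpa [g, hP.reachProb_of_mem_left hyB hyA] using h y hyB
  have hharm : ∀ y ∈ B \ (A ∪ ibdry B), g y ≤ stepAvg g y := fun y hy => by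
    have hyA : y ∉ A := fun h => hy.2 (.inl h)
    have hyB : y ∉ ibdry B := fun h => hy.2 (.inr h)
    simp only [g, stepAvg_sub, stepAvg_const_mul, stepAvg_const]
    rw [← hP.hitProb_eq_stepAvg hyA, ← hP.reachProb_eq_stepAvg hyB hyA]
  have hmax := le_of_subharmonic (hB.subset Set.sdiff_subset) hharm (δ := 0) fun y hy => by
    obtain ⟨hyW, z, hz, hyz⟩ := hy
    obtain ⟨i, rfl⟩ := zadj_iff.1 (zadj_symm hyz)
    have hzW := not_not.1 hz
    have hyB := add_unitStep_mem_of_notMem_ibdry hzW.1 (fun h => hzW.2 (.inr h)) i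
    exact hbdry _ (by_contra fun h => hyW ⟨hyB, h⟩)
  intro x hx
  refine sub_nonpos.1 (?_ : g x ≤ 0)
  by_cases hxb : x ∈ A ∪ ibdry B
  · exact hbdry x hxb
  · exact hmax x ⟨hx, hxb⟩

lemma abs_escProb_sub_le [NeZero d] (hP : IsSRW d P) {B : Set (ZV d)} (hB : B.Finite) {s δ : ℝ}
    (h : ∀ y ∈ ibdry B, |1 - hitProb P A y - s| ≤ δ) (hx : ∀ i, x + unitStep i ∈ B) :
    |escProb P A x - s * (P x).real {ω | hitT (ibdry B) ω < hitT A ω}| ≤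
      δ * (P x).real {ω | hitT (ibdry B) ω < hitT A ω} := by
  have hstep (a c : ℝ) (hac : ∀ y ∈ ibdry B, a * (1 - hitProb P A y) ≤ c) :
      a * escProb P A x ≤ c * (P x).real {ω | hitT (ibdry B) ω < hitT A ω} := by
    have : stepAvg (fun y => a * (1 - hitProb P A y)) x ≤
        stepAvg (fun y => c * reachProb P (ibdry B) A y) x :=
      stepAvg_mono fun i => hP.mul_one_sub_hitProb_le_mul_reachProb hB hac _ (hx i)
    simpa only [stepAvg_const_mul, stepAvg_sub, stepAvg_const, hP.escProb_eq_one_sub_stepAvg,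
      hP.measureReal_hitT_lt_hitT] using this
  have hupper := hstep 1 (s + δ) fun y hy => by linarith [(abs_le.1 (h y hy)).2]
  have hlower := hstep (-1) (δ - s) fun y hy => by linarith [(abs_le.1 (h y hy)).1]
  exact abs_le.2 ⟨by linarith, by linarith⟩

end IsSRW

lemma capac_mul_harmMeas (P : ZV d → Measure (ℕ → ZV d)) {A : Set (ZV d)} (hA : A.Finite)
    {x : ZV d} (hx : x ∈ A) : capac P A * harmMeas P A x = escProb P A x := by
  have := hA.fintype
  have hnonneg : ∀ y : A, 0 ≤ escProb P A y := fun y => ENNReal.toReal_nonneg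
  refine mul_div_cancel_of_imp' fun hcap => ?_
  rw [capac, tsum_fintype, Finset.sum_eq_zero_iff_of_nonneg fun y _ => hnonneg y] at hcap
  exact hcap ⟨x, hx⟩ (Finset.mem_univ _)

/-! ### Powers of the Euclidean norm -/

lemma znorm_nonneg (x : ZV d) : 0 ≤ znorm x := Real.sqrt_nonneg _

lemma znorm_sq (x : ZV d) : znorm x ^ 2 = ∑ j, (x j : ℝ) ^ 2 :=
  Real.sq_sqrt (Finset.sum_nonneg fun _ _ => sq_nonneg _)

lemma abs_le_znorm (x : ZV d) (j : Fin d) : |(x j : ℝ)| ≤ znorm x :=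
  Real.abs_le_sqrt (Finset.single_le_sum (f := fun j => (x j : ℝ) ^ 2)
    (fun _ _ => sq_nonneg _) (Finset.mem_univ j))

lemma zball_finite (d : ℕ) (r : ℝ) : (zball d r).Finite := by
  refine (Set.finite_Icc (fun _ : Fin d => -⌊r⌋) fun _ => ⌊r⌋).subset fun x hx => ?_
  have hcoord (j : Fin d) : |x j| ≤ ⌊r⌋ := by
    rw [Int.le_floor, Int.cast_abs]
    exact (abs_le_znorm x j).trans hx
  exact ⟨fun j => (abs_le.1 (hcoord j)).1, fun j => (abs_le.1 (hcoord j)).2⟩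

lemma tendsto_znorm_cofinite : Tendsto (znorm (d := d)) cofinite atTop :=
  tendsto_atTop.2 fun r => (zball_finite d r).eventually_cofinite_notMem.mono fun _ hx =>
    (not_le.1 hx).le

lemma eventually_forall_notMem_zball {p : ZV d → Prop} (hp : ∀ᶠ x in cofinite, p x) :
    ∀ᶠ r in atTop, ∀ x ∉ zball d r, p x := by
  have hball : ∀ᶠ r in atTop, ∀ x ∈ {x | ¬p x}, znorm x ≤ r :=
    (eventually_all_finite hp).2 fun x _ => eventually_ge_atTop (znorm x)
  exact hball.mono fun r h x hx => by_contra fun hpx => hx (h x hpx)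

/-- The increment of the squared Euclidean norm when the walk at `x` takes the step `i`. -/
noncomputable def normSqIncr (x : ZV d) (i : Fin d × Bool) : ℝ :=
  znorm (x + unitStep i) ^ 2 - znorm x ^ 2

lemma normSqIncr_eq (x : ZV d) (i : Fin d × Bool) :
    normSqIncr x i = 1 + (if i.2 then 2 else -2) * x i.1 := by
  rw [normSqIncr, znorm_sq, znorm_sq, ← Finset.sum_sub_distrib,
    Finset.sum_eq_single_of_mem i.1 (Finset.mem_univ _) fun j _ hj => by simp [unitStep, hj]]
  simp only [unitStep, Pi.add_apply, Pi.single_eq_same]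
  split_ifs <;> push_cast <;> ring

lemma abs_normSqIncr_le (x : ZV d) (i : Fin d × Bool) :
    |normSqIncr x i| ≤ 1 + 2 * znorm x := by
  have := abs_le.1 (abs_le_znorm x i.1)
  rw [normSqIncr_eq, abs_le]
  split_ifs <;> constructor <;> linarith

lemma sum_normSqIncr (x : ZV d) : ∑ i, normSqIncr x i = 2 * d := by
  have hpair (j : Fin d) : ∑ b, normSqIncr x (j, b) = 2 := by
    simp only [normSqIncr_eq, Fintype.sum_bool, if_true, Bool.false_eq_true, if_false]
    ring
  simp only [Fintype.sum_prod_type, hpair, Finset.sum_const, Finset.card_univ, Fintype.card_fin,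
    nsmul_eq_mul, mul_comm]

lemma sum_normSqIncr_sq (x : ZV d) : ∑ i, normSqIncr x i ^ 2 = 2 * d + 8 * znorm x ^ 2 := by
  have hpair (j : Fin d) : ∑ b, normSqIncr x (j, b) ^ 2 = 2 + 8 * (x j : ℝ) ^ 2 := by
    simp only [normSqIncr_eq, Fintype.sum_bool, if_true, Bool.false_eq_true, if_false]
    ring
  simp only [Fintype.sum_prod_type, hpair, Finset.sum_add_distrib, Finset.sum_const,
    Finset.card_univ, Fintype.card_fin, nsmul_eq_mul, mul_comm, ← Finset.sum_mul, znorm_sq]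

lemma znorm_add_unitStep_le (x : ZV d) (i : Fin d × Bool) :
    znorm (x + unitStep i) ≤ znorm x + 1 := by
  have hnonneg := znorm_nonneg x
  refine (sq_le_sq₀ (znorm_nonneg _) (by positivity)).1 ?_
  have := (le_abs_self _).trans (abs_normSqIncr_le x i)
  rw [normSqIncr] at this
  linarith

lemma znorm_le_of_zadj {x y : ZV d} (h : zadj x y) : znorm y ≤ znorm x + 1 := by
  obtain ⟨i, rfl⟩ := zadj_iff.1 h
  exact znorm_add_unitStep_le x i

lemma isBigO_one_add_rpow_sub (a : ℝ) :
    (fun w : ℝ => (1 + w) ^ a - (1 + a * w + a * (a - 1) / 2 * w ^ 2)) =O[𝓝 0]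
      fun w => w ^ 3 := by
  have hchoose : Ring.choose a 2 = a * (a - 1) / 2 := by
    have htwo : 2 * Ring.choose a 2 = a * (a - 1) := by
      simpa using Ring.choose_smul_choose a one_le_two
    linarith
  have hsum (w : ℝ) : (binomialSeries ℝ a).partialSum 3 w =
      1 + a * w + a * (a - 1) / 2 * w ^ 2 := by
    simp [FormalMultilinearSeries.partialSum, Finset.sum_range_succ, binomialSeries, hchoose,
      mul_comm]
  have h := (Real.one_add_rpow_hasFPowerSeriesAt_zero (a := a)).isBigO_sub_partialSum_pow 3
  simpa only [zero_add, hsum, ← norm_pow, isBigO_norm_right] using h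

lemma znorm_add_unitStep_rpow (a : ℝ) {x : ZV d} (hx : 0 < znorm x) (i : Fin d × Bool) :
    znorm (x + unitStep i) ^ a = znorm x ^ a * (1 + normSqIncr x i / znorm x ^ 2) ^ (a / 2) := by
  have hsq (y : ZV d) : znorm y ^ a = (znorm y ^ 2) ^ (a / 2) := by
    rw [← Real.rpow_natCast_mul (znorm_nonneg y)]
    ring_nf
  have hratio : 1 + normSqIncr x i / znorm x ^ 2 = znorm (x + unitStep i) ^ 2 / znorm x ^ 2 := by
    rw [normSqIncr]
    field_simp
    ring
  rw [hratio, hsq, hsq, ← Real.mul_rpow (by positivity) (by positivity)]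
  field_simp

lemma isBigO_normSqIncr_div (i : Fin d × Bool) :
    (fun x => normSqIncr x i / znorm x ^ 2) =O[cofinite] fun x => (znorm x)⁻¹ := by
  refine .of_bound 3 ?_
  filter_upwards [tendsto_znorm_cofinite.eventually_ge_atTop 1] with x hx
  rw [norm_div, norm_inv, norm_pow, Real.norm_eq_abs, Real.norm_of_nonneg (znorm_nonneg x)]
  have := abs_normSqIncr_le x i
  rw [div_le_iff₀ (by positivity)]
  field_simp
  linarith

lemma isBigO_znorm_add_unitStep_rpow_sub (a : ℝ) (i : Fin d × Bool) :
    (fun x => znorm (x + unitStep i) ^ a - znorm x ^ a *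
      (1 + a / 2 * (normSqIncr x i / znorm x ^ 2) +
        a / 2 * (a / 2 - 1) / 2 * (normSqIncr x i / znorm x ^ 2) ^ 2)) =O[cofinite]
      fun x => znorm x ^ a * (znorm x)⁻¹ ^ 3 := by
  have hinv : Tendsto (fun x : ZV d => (znorm x)⁻¹) cofinite (𝓝 0) :=
    tendsto_inv_atTop_zero.comp tendsto_znorm_cofinite
  have htaylor := ((isBigO_one_add_rpow_sub (a / 2)).comp_tendsto
    ((isBigO_normSqIncr_div i).trans_tendsto hinv)).trans ((isBigO_normSqIncr_div i).pow 3)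
  refine ((isBigO_refl (fun x => znorm x ^ a) _).mul htaylor).congr' ?_ .rfl
  filter_upwards [tendsto_znorm_cofinite.eventually_gt_atTop 0] with x hx
  simp only [Function.comp_apply]
  rw [znorm_add_unitStep_rpow a hx i, mul_sub]

/-- The discrete analogue of `Δ|x|ᵃ = a (a + d - 2) |x|ᵃ⁻²`. -/
lemma isBigO_stepAvg_znorm_rpow_sub [NeZero d] (a : ℝ) :
    (fun x : ZV d => stepAvg (fun y => znorm y ^ a) x - znorm x ^ a -
      a * (a + d - 2) / (2 * d) * (znorm x ^ a * (znorm x)⁻¹ ^ 2)) =O[cofinite]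
      fun x => znorm x ^ a * (znorm x)⁻¹ ^ 3 := by
  have hrest : (fun x : ZV d => znorm x ^ a * (znorm x)⁻¹ ^ 4) =O[cofinite]
      fun x => znorm x ^ a * (znorm x)⁻¹ ^ 3 := by
    refine (isBigO_refl _ _).mul (.of_bound 1 ?_)
    filter_upwards [tendsto_znorm_cofinite.eventually_ge_atTop 1] with x hx
    rw [one_mul, norm_pow, norm_pow, norm_inv, Real.norm_of_nonneg (znorm_nonneg x)]
    exact pow_le_pow_of_le_one (by positivity) (inv_le_one_of_one_le₀ hx) (by norm_num)
  have hsum := (IsBigO.sum fun i (_ : i ∈ Finset.univ) =>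
    isBigO_znorm_add_unitStep_rpow_sub (d := d) a i).const_mul_left (2 * d : ℝ)⁻¹
  refine (hsum.add (hrest.const_mul_left (a / 2 * (a / 2 - 1) / 2))).congr' ?_ .rfl
  filter_upwards [tendsto_znorm_cofinite.eventually_gt_atTop 0] with x hx
  have hd : (d : ℝ) ≠ 0 := NeZero.ne _
  simp only [stepAvg, Fintype.expect_eq_sum_div_card, Finset.sum_apply, Finset.sum_sub_distrib,
    ← Finset.mul_sum, Finset.sum_add_distrib, div_pow, ← Finset.sum_div, sum_normSqIncr,
    sum_normSqIncr_sq, Finset.sum_const, Finset.card_univ, Fintype.card_prod, Fintype.card_fin,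
    Fintype.card_bool, nsmul_eq_mul, Nat.cast_mul, Nat.cast_two]
  field_simp
  ring

lemma eventually_mul_le_stepAvg_znorm_rpow_sub [NeZero d] {a : ℝ} (ha : 0 < a * (a + d - 2)) :
    ∃ κ > 0, ∀ᶠ x : ZV d in cofinite,
      κ * (znorm x ^ a * (znorm x)⁻¹ ^ 2) ≤ stepAvg (fun y => znorm y ^ a) x - znorm x ^ a := by
  set m : ℝ := a * (a + d - 2) / (2 * d)
  have hm : 0 < m := div_pos ha (by have := NeZero.pos d; positivity)
  have hinv : Tendsto (fun x : ZV d => (znorm x)⁻¹) cofinite (𝓝 0) :=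
    tendsto_inv_atTop_zero.comp tendsto_znorm_cofinite
  have hlittle := (isBigO_stepAvg_znorm_rpow_sub (d := d) a).trans_isLittleO <|
    (isBigO_refl _ _).mul_isLittleO
      ((isLittleO_pow_pow (𝕜 := ℝ) (show 2 < 3 by norm_num)).comp_tendsto hinv)
  refine ⟨m / 2, half_pos hm, ?_⟩
  filter_upwards [hlittle.def (half_pos hm)] with x hx
  have hnonneg : 0 ≤ znorm x ^ a * (znorm x)⁻¹ ^ 2 :=
    mul_nonneg (Real.rpow_nonneg (znorm_nonneg x) a) (sq_nonneg _)
  simp only [Function.comp_apply, Real.norm_of_nonneg hnonneg, Real.norm_eq_abs] at hx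
  linarith [(abs_le.1 hx).1]

/-- The radial function `|x|²⁻ᵈ + c |x|¹⁻ᵈ`: far from the origin it is subharmonic for large `c`
and superharmonic for large `-c`. -/
noncomputable def barrier (c : ℝ) (x : ZV d) : ℝ :=
  znorm x ^ (2 - d : ℝ) + c * znorm x ^ (1 - d : ℝ)

lemma barrier_eq (c : ℝ) {x : ZV d} (hx : 0 < znorm x) :
    barrier c x = znorm x ^ (2 - d : ℝ) * (1 + c / znorm x) := by
  rw [barrier, show (1 - d : ℝ) = 2 - d - 1 by ring, Real.rpow_sub_one hx.ne']
  ring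

lemma stepAvg_barrier (c : ℝ) (x : ZV d) :
    stepAvg (barrier c) x =
      stepAvg (fun y => znorm y ^ (2 - d : ℝ)) x +
        c * stepAvg (fun y => znorm y ^ (1 - d : ℝ)) x := by
  rw [← stepAvg_const_mul, ← stepAvg_add]
  rfl

lemma tendsto_barrier (hd : 2 < d) (c : ℝ) :
    Tendsto (barrier (d := d) c) cofinite (𝓝 0) := by
  have hd' : (2 : ℝ) < d := by exact_mod_cast hd
  have hpow {a : ℝ} (ha : a < 0) : Tendsto (fun x : ZV d => znorm x ^ a) cofinite (𝓝 0) := by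
    have h := (tendsto_rpow_neg_atTop (neg_pos.2 ha)).comp (tendsto_znorm_cofinite (d := d))
    simpa only [neg_neg, Function.comp_def] using h
  have h₂ : Tendsto (fun x : ZV d => znorm x ^ (2 - d : ℝ)) cofinite (𝓝 0) := hpow (by linarith)
  have h₁ : Tendsto (fun x : ZV d => znorm x ^ (1 - d : ℝ)) cofinite (𝓝 0) := hpow (by linarith)
  unfold barrier
  simpa only [mul_zero, add_zero] using h₂.add (h₁.const_mul c)

lemma exists_barrier (hd : 2 ≤ d) :
    ∃ c > 0, ∀ᶠ x : ZV d in cofinite,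
      barrier c x ≤ stepAvg (barrier c) x ∧ stepAvg (barrier (-c)) x ≤ barrier (-c) x := by
  have : NeZero d := ⟨by omega⟩
  have hd' : (2 : ℝ) ≤ d := by exact_mod_cast hd
  obtain ⟨K, hK, hharm⟩ := (isBigO_stepAvg_znorm_rpow_sub (d := d) (2 - d)).exists_pos
  obtain ⟨κ, hκ, hconvex⟩ :=
    eventually_mul_le_stepAvg_znorm_rpow_sub (d := d) (a := 1 - d) (by ring_nf; linarith)
  refine ⟨K / κ, div_pos hK hκ, ?_⟩
  filter_upwards [hharm.bound, hconvex, tendsto_znorm_cofinite.eventually_gt_atTop 0]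
    with x hx hconv hpos
  have herr : |stepAvg (fun y => znorm y ^ (2 - d : ℝ)) x - znorm x ^ (2 - d : ℝ)| ≤
      K / κ * (stepAvg (fun y => znorm y ^ (1 - d : ℝ)) x - znorm x ^ (1 - d : ℝ)) :=
    calc
      _ ≤ K * (znorm x ^ (2 - d : ℝ) * (znorm x)⁻¹ ^ 3) := by
        simpa [abs_of_pos hpos, abs_of_nonneg (Real.rpow_nonneg hpos.le _)] using hx
      _ = K / κ * (κ * (znorm x ^ (1 - d : ℝ) * (znorm x)⁻¹ ^ 2)) := by
        rw [show (1 - d : ℝ) = 2 - d - 1 by ring, Real.rpow_sub_one hpos.ne']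
        field_simp
      _ ≤ _ := by gcongr
  rw [stepAvg_barrier, stepAvg_barrier, barrier, barrier]
  have := abs_le.1 herr
  constructor <;> linarith

/-! ### The hitting probability of a ball -/

lemma abs_rpow_sub_rpow_le {a u v : ℝ} (ha : a ≤ 1) (hu : 1 ≤ u) (hv : 1 ≤ v) :
    |u ^ a - v ^ a| ≤ |a| * |u - v| := by
  refine (convex_Ici (1 : ℝ)).norm_image_sub_le_of_norm_hasDerivWithin_le
    (f := fun x => x ^ a) (f' := fun x => a * x ^ (a - 1))
    (fun x hx => ?_) (fun x hx => ?_) hv hu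
  · exact (Real.hasDerivAt_rpow_const (.inl (zero_lt_one.trans_le hx).ne')).hasDerivWithinAt
  · have hx0 : 0 ≤ x := zero_le_one.trans hx
    rw [Real.norm_eq_abs, abs_mul, abs_of_nonneg (Real.rpow_nonneg hx0 _)]
    exact mul_le_of_le_one_right (abs_nonneg a)
      (Real.rpow_le_one_of_one_le_of_nonpos hx (sub_nonpos.2 ha))

lemma one_sub_mul_le_rpow_mul_inv {a c h : ℝ} (ha : 0 ≤ a) (hc : 0 ≤ c) (hh : 0 ≤ h) :
    1 - (a + c) * h ≤ (1 + h) ^ (-a) * (1 + c * h)⁻¹ := by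
  have hpow : 1 - a * h ≤ (1 + h) ^ (-a) := by
    have hdist := abs_rpow_sub_rpow_le (a := -a) (by linarith) (le_refl 1)
      (le_add_of_nonneg_right hh)
    rw [Real.one_rpow, abs_neg, abs_of_nonneg ha, sub_add_cancel_left, abs_neg,
      abs_of_nonneg hh] at hdist
    exact sub_le_comm.1 ((le_abs_self _).trans hdist)
  have hinv : 1 - c * h ≤ (1 + c * h)⁻¹ := by
    rw [← one_div, le_div_iff₀ (by positivity)]
    nlinarith [sq_nonneg (c * h)]
  have hinv_one : (1 + c * h)⁻¹ ≤ 1 :=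
    inv_le_one_of_one_le₀ (le_add_of_nonneg_right (by positivity))
  calc
    1 - (a + c) * h = 1 - c * h - a * h := by ring
    _ ≤ (1 + c * h)⁻¹ - a * h * (1 + c * h)⁻¹ :=
      sub_le_sub hinv (mul_le_of_le_one_right (mul_nonneg ha hh) hinv_one)
    _ = (1 - a * h) * (1 + c * h)⁻¹ := by ring
    _ ≤ _ := by gcongr

lemma sub_one_lt_znorm_of_mem_ibdry_zball {r : ℝ} {y : ZV d} (hy : y ∈ ibdry (zball d r)) :
    r - 1 < znorm y := by
  obtain ⟨-, z, hz, hyz⟩ := hy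
  have hz : r < znorm z := not_le.1 hz
  linarith [znorm_le_of_zadj hyz]

lemma inv_mul_barrier (c t : ℝ) {r : ℝ} (hr : 0 < r) {x : ZV d} (hx : 0 < znorm x) :
    (r ^ (2 - d : ℝ) * t)⁻¹ * barrier c x =
      (znorm x / r) ^ (2 - d : ℝ) * ((1 + c / znorm x) / t) := by
  rw [barrier_eq c hx, Real.div_rpow hx.le hr.le]
  ring

lemma le_barrier_neg (hd : 2 ≤ d) {c s r : ℝ} (hc : 0 ≤ c) (hs : c ≤ s) (hs0 : 0 < s) {x : ZV d}
    (hsx : s ≤ znorm x) (hxr : znorm x ≤ r) :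
    r ^ (2 - d : ℝ) * (1 - c / s) ≤ barrier (-c) x := by
  have hd' : (2 : ℝ) ≤ d := by exact_mod_cast hd
  have hx : 0 < znorm x := hs0.trans_le hsx
  rw [barrier_eq _ hx, neg_div, ← sub_eq_add_neg]
  have hfac : 0 ≤ 1 - c / s := sub_nonneg.2 ((div_le_one hs0).2 hs)
  gcongr ?_ * (1 - ?_)
  · exact Real.rpow_le_rpow_of_nonpos hx hxr (by linarith)
  · gcongr

lemma barrier_le (hd : 2 ≤ d) {c s : ℝ} (hc : 0 ≤ c) (hs : 0 < s) {x : ZV d}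
    (hsx : s ≤ znorm x) : barrier c x ≤ s ^ (2 - d : ℝ) * (1 + c / s) := by
  have hd' : (2 : ℝ) ≤ d := by exact_mod_cast hd
  have hx : 0 < znorm x := hs.trans_le hsx
  rw [barrier_eq _ hx]
  gcongr ?_ * (1 + ?_)
  · exact Real.rpow_le_rpow_of_nonpos hs hsx (by linarith)
  · gcongr

namespace IsSRW

variable {P : ZV d → Measure (ℕ → ZV d)}

lemma hitProb_zball_le_inv_mul_barrier (hP : IsSRW d P) (hd : 2 ≤ d) {c r : ℝ} (hc : 0 ≤ c)
    (hr : c + 1 < r) (hsuper : ∀ y ∉ zball d r, stepAvg (barrier (-c)) y ≤ barrier (-c) y)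
    {y : ZV d} (hy : y ∉ zball d r) :
    hitProb P (zball d r) y ≤
      (r ^ (2 - d : ℝ) * (1 - c / (r - 1)))⁻¹ * barrier (-c) y := by
  have hr0 : 0 < r := by linarith
  have hfac : 0 < 1 - c / (r - 1) := sub_pos.2 ((div_lt_one (by linarith)).2 (by linarith))
  refine hP.hitProb_le_of_superharmonic
    (F := fun z => (r ^ (2 - d : ℝ) * (1 - c / (r - 1)))⁻¹ * barrier (-c) z)
    (fun z hz => ?_) (fun z hz => ?_) (fun z hz => ?_) hy
  · have hrz : r < znorm z := not_le.1 hz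
    have hnonneg : 0 ≤ barrier (-c) z :=
      (mul_nonneg (Real.rpow_nonneg (znorm_nonneg z) _) hfac.le).trans
        (le_barrier_neg hd hc (by linarith) (by linarith) (by linarith) le_rfl)
    positivity
  · rw [stepAvg_const_mul]
    gcongr
    exact hsuper z hz
  · rw [← div_eq_inv_mul, one_le_div (by positivity)]
    exact le_barrier_neg hd hc (by linarith) (by linarith)
      (sub_one_lt_znorm_of_mem_ibdry_zball hz).le hz.1

lemma hitProb_zball_le (hP : IsSRW d P) (hd : 2 ≤ d) {c r : ℝ} (hc : 0 ≤ c) (hr : c + 1 < r)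
    (hsuper : ∀ y ∉ zball d r, stepAvg (barrier (-c)) y ≤ barrier (-c) y) {y : ZV d}
    (hy : y ∉ zball d r) :
    hitProb P (zball d r) y ≤ (znorm y / r) ^ (2 - d : ℝ) + c / (r - 1 - c) := by
  have hd' : (2 : ℝ) ≤ d := by exact_mod_cast hd
  have hr0 : 0 < r := by linarith
  have hr1 : 0 < r - 1 := by linarith
  have hrc : 0 < r - 1 - c := by linarith
  have hyr : r < znorm y := not_le.1 hy
  have hy0 : 0 < znorm y := hr0.trans hyr
  calc
    hitProb P (zball d r) y
      ≤ (r ^ (2 - d : ℝ) * (1 - c / (r - 1)))⁻¹ * barrier (-c) y :=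
      hP.hitProb_zball_le_inv_mul_barrier hd hc hr hsuper hy
    _ = (znorm y / r) ^ (2 - d : ℝ) * ((1 - c / znorm y) / (1 - c / (r - 1))) := by
      rw [inv_mul_barrier _ _ hr0 hy0, neg_div, ← sub_eq_add_neg]
    _ ≤ (znorm y / r) ^ (2 - d : ℝ) * (1 / (1 - c / (r - 1))) := by
      rw [one_sub_div hr1.ne']
      gcongr
      exact sub_le_self _ (by positivity)
    _ = (znorm y / r) ^ (2 - d : ℝ) + (znorm y / r) ^ (2 - d : ℝ) * (c / (r - 1 - c)) := by
      rw [one_sub_div hr1.ne']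
      field_simp
      ring
    _ ≤ (znorm y / r) ^ (2 - d : ℝ) + c / (r - 1 - c) := by
      gcongr
      exact mul_le_of_le_one_left (by positivity) <|
        Real.rpow_le_one_of_one_le_of_nonpos ((one_le_div hr0).2 hyr.le) (by linarith)

lemma inv_mul_barrier_le_hitProb_zball (hP : IsSRW d P) (hd : 2 < d) {c r : ℝ} (hc : 0 ≤ c)
    (hr : 1 < r) (hsub : ∀ y ∉ zball d r, barrier c y ≤ stepAvg (barrier c) y) {y : ZV d}
    (hy : y ∉ zball d r) :
    ((r - 1) ^ (2 - d : ℝ) * (1 + c / (r - 1)))⁻¹ * barrier c y ≤ hitProb P (zball d r) y := by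
  have : NeZero d := ⟨by omega⟩
  have hr1 : 0 < r - 1 := by linarith
  refine hP.le_hitProb_of_subharmonic
    (F := fun z => ((r - 1) ^ (2 - d : ℝ) * (1 + c / (r - 1)))⁻¹ * barrier c z)
    (fun z hz => ?_) (fun z hz => ?_) ?_ hy
  · rw [stepAvg_const_mul]
    gcongr
    exact hsub z hz
  · rw [← div_eq_inv_mul, div_le_one (by positivity)]
    exact barrier_le hd.le hc hr1 (sub_one_lt_znorm_of_mem_ibdry_zball hz).le
  · simpa only [mul_zero] using (tendsto_barrier hd c).const_mul _

lemma le_hitProb_zball (hP : IsSRW d P) (hd : 2 < d) {c r : ℝ} (hc : 0 ≤ c) (hr : 1 < r)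
    (hsub : ∀ y ∉ zball d r, barrier c y ≤ stepAvg (barrier c) y) {y : ZV d}
    (hy : y ∉ zball d r) :
    (znorm y / r) ^ (2 - d : ℝ) - (d - 2 + c) / (r - 1) ≤ hitProb P (zball d r) y := by
  have hd' : (2 : ℝ) < d := by exact_mod_cast hd
  have hr1 : 0 < r - 1 := by linarith
  have hr0 : 0 < r := by linarith
  have hyr : r < znorm y := not_le.1 hy
  have hy0 : 0 < znorm y := hr0.trans hyr
  have hfac : 1 - (d - 2 + c) / (r - 1) ≤
      (r / (r - 1)) ^ (2 - d : ℝ) * (1 / (1 + c / (r - 1))) := by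
    have hratio : r / (r - 1) = 1 + (r - 1)⁻¹ := by
      field_simp
      ring
    rw [hratio, ← neg_sub (d : ℝ), one_div, div_eq_mul_inv, div_eq_mul_inv]
    exact one_sub_mul_le_rpow_mul_inv (by linarith) hc (inv_pos.2 hr1).le
  calc
    (znorm y / r) ^ (2 - d : ℝ) - (d - 2 + c) / (r - 1)
      ≤ (znorm y / r) ^ (2 - d : ℝ) * (1 - (d - 2 + c) / (r - 1)) := by
      rw [mul_one_sub]
      gcongr
      exact mul_le_of_le_one_left (div_nonneg (by linarith) hr1.le) <|
        Real.rpow_le_one_of_one_le_of_nonpos ((one_le_div hr0).2 hyr.le) (by linarith)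
    _ ≤ (znorm y / r) ^ (2 - d : ℝ) *
        ((r / (r - 1)) ^ (2 - d : ℝ) * (1 / (1 + c / (r - 1)))) := by gcongr
    _ = (znorm y / (r - 1)) ^ (2 - d : ℝ) * (1 / (1 + c / (r - 1))) := by
      rw [← mul_assoc, ← Real.mul_rpow (by positivity) (by positivity),
        div_mul_div_cancel₀ hr0.ne']
    _ ≤ (znorm y / (r - 1)) ^ (2 - d : ℝ) * ((1 + c / znorm y) / (1 + c / (r - 1))) := by
      gcongr
      exact le_add_of_nonneg_right (by positivity)
    _ = ((r - 1) ^ (2 - d : ℝ) * (1 + c / (r - 1)))⁻¹ * barrier c y :=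
      (inv_mul_barrier _ _ hr1 hy0).symm
    _ ≤ hitProb P (zball d r) y := hP.inv_mul_barrier_le_hitProb_zball hd hc hr hsub hy

lemma abs_hitProb_zball_sub_le (hP : IsSRW d P) (hd : 2 < d) :
    ∃ C > 0, ∀ᶠ r in atTop, ∀ y ∉ zball d r,
      |hitProb P (zball d r) y - (znorm y / r) ^ (2 - d : ℝ)| ≤ C / r := by
  have hd' : (2 : ℝ) < d := by exact_mod_cast hd
  obtain ⟨c, hc, hbarrier⟩ := exists_barrier hd.le
  refine ⟨2 * (d - 2 + c), by linarith, ?_⟩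
  filter_upwards [eventually_forall_notMem_zball hbarrier, eventually_ge_atTop (2 * (c + 1))]
    with r hbar hr y hy
  have hlower := hP.le_hitProb_zball hd hc.le (by linarith) (fun z hz => (hbar z hz).1) hy
  have hupper := hP.hitProb_zball_le hd.le hc.le (by linarith) (fun z hz => (hbar z hz).2) hy
  have hlower_err : (d - 2 + c) / (r - 1) ≤ 2 * (d - 2 + c) / r := by
    rw [div_le_div_iff₀ (by linarith) (by linarith)]
    nlinarith
  have hupper_err : c / (r - 1 - c) ≤ 2 * (d - 2 + c) / r := by
    rw [div_le_div_iff₀ (by linarith) (by linarith)]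
    nlinarith
  rw [abs_le]
  constructor <;> linarith

lemma abs_one_sub_hitProb_zball_sub_le (hP : IsSRW d P) (hd : 2 < d) :
    ∃ C > 0, ∀ᶠ r in atTop, ∀ k ≥ 1, ∀ y ∈ ibdry (zball d (r + k)),
      |1 - hitProb P (zball d r) y - (1 - (1 + k / r) ^ (-((d : ℝ) - 2)))| ≤ C / r := by
  have hd' : (2 : ℝ) < d := by exact_mod_cast hd
  obtain ⟨C, hC, hball⟩ := hP.abs_hitProb_zball_sub_le hd
  refine ⟨C + (d - 2), by linarith, ?_⟩
  filter_upwards [hball, eventually_gt_atTop 0] with r hr hr0 k hk y hy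
  have hlow : r + k - 1 < znorm y := sub_one_lt_znorm_of_mem_ibdry_zball hy
  have hupp : znorm y ≤ r + k := hy.1
  have hshell : |(znorm y / r) ^ (2 - d : ℝ) - (1 + k / r) ^ (-((d : ℝ) - 2))| ≤ (d - 2) / r := by
    rw [neg_sub]
    refine (abs_rpow_sub_rpow_le (by linarith) ((one_le_div hr0).2 (by linarith))
      (le_add_of_nonneg_right (by positivity))).trans ?_
    rw [abs_of_neg (by linarith : (2 - d : ℝ) < 0), neg_sub, one_add_div hr0.ne', ← sub_div,
      abs_div, abs_of_pos hr0, mul_div_assoc']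
    gcongr
    exact mul_le_of_le_one_right (by linarith) (abs_le.2 ⟨by linarith, by linarith⟩)
  have hy_notMem : y ∉ zball d r := not_le.2 (by linarith : r < znorm y)
  calc
    _ = |(hitProb P (zball d r) y - (znorm y / r) ^ (2 - d : ℝ)) +
        ((znorm y / r) ^ (2 - d : ℝ) - (1 + k / r) ^ (-((d : ℝ) - 2)))| := by
      rw [← abs_neg]
      ring_nf
    _ ≤ C / r + (d - 2) / r := (abs_add_le _ _).trans (add_le_add (hr y hy_notMem) hshell)
    _ = _ := (add_div _ _ _).symm

end IsSRW

lemma exists_mul_add_eq {e s p δ : ℝ} (hp : 0 ≤ p) (hδ : 0 ≤ δ) (h : |e - s * p| ≤ δ * p) :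
    ∃ ε, |ε| ≤ δ ∧ p * (s + ε) = e := by
  obtain rfl | hp := hp.eq_or_lt
  · exact ⟨0, by simpa using hδ, by simpa [eq_comm] using h⟩
  · refine ⟨(e - s * p) / p, ?_, by field_simp; ring⟩
    rwa [abs_div, abs_of_pos hp, div_le_iff₀ hp]

theorem escape_to_outer_sphere_general (hd : 3 ≤ d) {P : ZV d → Measure (ℕ → ZV d)}
    (hP : IsSRW d P) :
    ∃ C > (0 : ℝ), ∀ᶠ r : ℝ in atTop, ∀ k ≥ 1, ∀ x ∈ zball d r, ∃ ε : ℝ, |ε| ≤ C / r ∧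
      (P x {ω | hitT (ibdry (zball d (r + k))) ω < hitT (zball d r) ω}).toReal
          * (1 - (1 + k / r) ^ (-((d : ℝ) - 2)) + ε)
        = capac P (zball d r) * harmMeas P (zball d r) x := by
  have : NeZero d := ⟨by omega⟩
  obtain ⟨C, hC, hescape⟩ := hP.abs_one_sub_hitProb_zball_sub_le hd
  refine ⟨C, hC, ?_⟩
  filter_upwards [hescape, eventually_gt_atTop 0] with r hr hr0 k hk x hx
  have hinner (i) : x + unitStep i ∈ zball d (r + k) :=
    (znorm_add_unitStep_le x i).trans (add_le_add hx hk)
  rw [capac_mul_harmMeas P (zball_finite d r) hx]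
  exact exists_mul_add_eq measureReal_nonneg (by positivity)
    (hP.abs_escProb_sub_le (zball_finite d (r + k)) (hr k hk) hinner)

/-- For `d ≥ 3`, `x ∈ ∂B(n)`, `k > 1`, as `n → ∞`:
`P_x[τ₁(∂B(n+k)) < τ₁(B(n))] = cap(B(n)) hm_{B(n)}(x) / (1 − (1+k/n)^{−(d−2)} + O(n^{−1}))`,
with the `O(n^{−1})` uniform in `k`. -/
theorem escape_to_outer_sphere
    (d : ℕ) (hd : 3 ≤ d)
    (P : ZV d → Measure (ℕ → ZV d)) (hprob : ∀ x, IsProbabilityMeasure (P x))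
    (hP : IsSRW d P) :
    ∃ C > (0 : ℝ), ∃ n₀ : ℕ, ∀ n : ℕ, n₀ ≤ n → ∀ k : ℝ, 1 < k →
      ∀ x ∈ ibdry (zball d n), ∃ ε : ℝ, |ε| ≤ C / n ∧
        (P x {ω | hitT (ibdry (zball d (n + k))) ω < hitT (zball d n) ω}).toReal
            * (1 - (1 + k / n) ^ (-((d : ℝ) - 2)) + ε)
          = capac P (zball d n) * harmMeas P (zball d n) x := by
  obtain ⟨C, hC, h⟩ := escape_to_outer_sphere_general hd hP
  obtain ⟨n₀, hn₀⟩ := eventually_atTop.1 (tendsto_natCast_atTop_atTop.eventually h)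
  exact ⟨C, hC, n₀, fun n hn k hk x hx => hn₀ n hn k hk.le x hx.1⟩
end
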